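/- For q a generic nonzero complex scalar (q = ±1 or not a root of unity), any semiring homomorphism f from the Grothendieck semiring R_+(O_q(SL(2))) to ℤ_+ is uniquely determined by the value f([V]), where V is any 2-dimensional simple O_q(SL(2))-comodule; the same holds with O_q(GL(2)) in place of O_q(SL(2)). -/

import Mathlib

/-!
Background definitions: comodules over a Hopf algebra, simple comodules, direct
summands, supports, subcoalgebras, cosemisimplicity, Gelfand-Kirillov dimension,
and (measured) Grothendieck semirings of cosemisimple Hopf algebras.
-/

open TensorProduct

/-- The data of a coaction of a Hopf algebra `H` on a `k`-vector space `X`: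
a linear map `ρ : X → X ⊗ H`.  The comodule axioms are recorded separately in
`Comod.IsComodule`. -/
structure Comod (k : Type) [Field k] (H : Type) [Ring H] [HopfAlgebra k H] : Type 1 where
  X : Type
  [addCommGroup : AddCommGroup X]
  [module : Module k X]
  ρ : X →ₗ[k] X ⊗[k] H

attribute [instance] Comod.addCommGroup Comod.module

namespace Comod

variable {k : Type} [Field k] {H : Type} [Ring H] [HopfAlgebra k H]

/-- The trivial `H`-comodule `𝟏`, i.e. `k` with coaction `x ↦ x ⊗ 1`. -/
noncomputable def unit (k : Type) [Field k] (H : Type) [Ring H] [HopfAlgebra k H] :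
    Comod k H where
  X := k
  ρ := (TensorProduct.mk k k H).flip 1

/-- The regular comodule: `H` coacting on itself by comultiplication. -/
noncomputable def regular (k : Type) [Field k] (H : Type) [Ring H] [HopfAlgebra k H] :
    Comod k H where
  X := H
  ρ := Coalgebra.comul

/-- Tensor product of comodules: the coaction on `M ⊗ N` is
`(id ⊗ id ⊗ μ_H) ∘ (id ⊗ τ ⊗ id) ∘ (ρ_M ⊗ ρ_N)`. -/
noncomputable def tensor (M N : Comod k H) : Comod k H where
  X := M.X ⊗[k] N.X
  ρ := (LinearMap.mul' k H).lTensor (M.X ⊗[k] N.X)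
        ∘ₗ (TensorProduct.tensorTensorTensorComm k M.X H N.X H).toLinearMap
        ∘ₗ TensorProduct.map M.ρ N.ρ

/-- Binary direct sum of comodules. -/
noncomputable def dsum (M N : Comod k H) : Comod k H where
  X := M.X × N.X
  ρ := (LinearMap.inl k M.X N.X).rTensor H ∘ₗ M.ρ ∘ₗ LinearMap.fst k M.X N.X
     + (LinearMap.inr k M.X N.X).rTensor H ∘ₗ N.ρ ∘ₗ LinearMap.snd k M.X N.X

/-- Finite direct sum of a family of comodules. -/
noncomputable def pi {ι : Type} [Fintype ι] (S : ι → Comod k H) : Comod k H where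
  X := ∀ i, (S i).X
  ρ := letI := Classical.decEq ι
    ∑ i : ι, (LinearMap.single k (fun j => (S j).X) i).rTensor H ∘ₗ (S i).ρ
        ∘ₗ LinearMap.proj i

/-- `n`-th tensor power of a comodule (`M^{⊗0} = 𝟏`, `M^{⊗1} = M`). -/
noncomputable def tpow (M : Comod k H) : ℕ → Comod k H
  | 0 => unit k H
  | 1 => M
  | n + 2 => (M.tpow (n + 1)).tensor M

/-- A linear map is a map of comodules if it intertwines the coactions. -/
def IsHom (M N : Comod k H) (f : M.X →ₗ[k] N.X) : Prop :=
  N.ρ ∘ₗ f = f.rTensor H ∘ₗ M.ρ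

/-- Isomorphism of comodules. -/
def Iso (M N : Comod k H) : Prop :=
  ∃ e : M.X ≃ₗ[k] N.X, IsHom M N e.toLinearMap

/-- The comodule axioms (coassociativity and counitality) for a coaction. -/
def IsComodule (M : Comod k H) : Prop :=
  (M.ρ.rTensor H ∘ₗ M.ρ =
      (TensorProduct.assoc k M.X H H).symm.toLinearMap
        ∘ₗ (Coalgebra.comul (R := k) (A := H)).lTensor M.X ∘ₗ M.ρ) ∧
  (TensorProduct.rid k M.X).toLinearMap
      ∘ₗ (Coalgebra.counit (R := k) (A := H)).lTensor M.X ∘ₗ M.ρ = LinearMap.id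

/-- A subspace `N ⊆ M` is a subcomodule if the coaction restricts to `N ⊗ H`. -/
def IsSubcomodule (M : Comod k H) (N : Submodule k M.X) : Prop :=
  ∀ x ∈ N, M.ρ x ∈ LinearMap.range (N.subtype.rTensor H)

/-- Simple (hence finite-dimensional) comodules. -/
def IsSimple (M : Comod k H) : Prop :=
  M.IsComodule ∧ Nontrivial M.X ∧ FiniteDimensional k M.X ∧
    ∀ N : Submodule k M.X, M.IsSubcomodule N → N = ⊥ ∨ N = ⊤

/-- `S` is a direct summand of `M` (as comodules): the inclusion splits. -/
def DirectSummand (S M : Comod k H) : Prop :=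
  ∃ (i : S.X →ₗ[k] M.X) (p : M.X →ₗ[k] S.X),
    IsHom S M i ∧ IsHom M S p ∧ p ∘ₗ i = LinearMap.id

/-- `C` is the support of the comodule `M`: the (unique) minimal subspace
`C ⊆ H` with `ρ(M) ⊆ M ⊗ C`. -/
def IsSupport (M : Comod k H) (C : Submodule k H) : Prop :=
  (∀ x : M.X, M.ρ x ∈ LinearMap.range (C.subtype.lTensor M.X)) ∧
    ∀ C' : Submodule k H,
      (∀ x : M.X, M.ρ x ∈ LinearMap.range (C'.subtype.lTensor M.X)) → C ≤ C'

end Comod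

/-- A subspace `C ⊆ H` is a subcoalgebra if `Δ(C) ⊆ C ⊗ C`. -/
def IsSubcoalgebra (k : Type) [Field k] (H : Type) [Ring H] [HopfAlgebra k H]
    (C : Submodule k H) : Prop :=
  ∀ x ∈ C, Coalgebra.comul (R := k) x ∈
    LinearMap.range (TensorProduct.map C.subtype C.subtype)

/-- A simple subcoalgebra: a nonzero subcoalgebra with no proper nonzero
subcoalgebras. -/
def IsSimpleSubcoalgebra (k : Type) [Field k] (H : Type) [Ring H] [HopfAlgebra k H]
    (C : Submodule k H) : Prop :=
  IsSubcoalgebra k H C ∧ C ≠ ⊥ ∧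
    ∀ D : Submodule k H, D ≤ C → IsSubcoalgebra k H D → D = ⊥ ∨ D = C

/-- A Hopf algebra is cosemisimple if every subcomodule of every comodule is a
direct summand. -/
def IsCosemisimple (k : Type) [Field k] (H : Type) [Ring H] [HopfAlgebra k H] : Prop :=
  ∀ M : Comod k H, M.IsComodule →
    ∀ N : Submodule k M.X, M.IsSubcomodule N →
      ∃ N' : Submodule k M.X, M.IsSubcomodule N' ∧ IsCompl N N'

open scoped ENNReal in
/-- The Gelfand-Kirillov dimension of a `k`-algebra `A`:
`sup_V limsup_n log(dim V^n)/log n` over finite-dimensional subspaces `V ⊆ A`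
(for a finitely generated algebra this agrees with the value computed from any
finite-dimensional generating subspace containing `1`). -/
noncomputable def GKdim (k : Type) (A : Type) [Field k] [Ring A] [Algebra k A] : ℝ≥0∞ :=
  ⨆ (V : Submodule k A) (_ : FiniteDimensional k V),
    Filter.limsup
      (fun n : ℕ => ENNReal.ofReal
        (Real.log (Module.finrank k ↥(V ^ n)) / Real.log n)) Filter.atTop

/-- The (measured) Grothendieck semiring of a cosemisimple Hopf algebra `H`:
a commutative semiring `R` together with a class map `cls` on finite-dimensional
`H`-comodules which is constant on isomorphism classes, additive on direct sums,
multiplicative on tensor products, sends `𝟏` to `1`, and induces a bijection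
between iso-classes of finite-dimensional comodules and elements of `R`.
The dimension function `d_H` on `R_+(H)` is recovered as `cls M ↦ dim_k M`. -/
structure GrSemiring (k : Type) [Field k] (H : Type) [Ring H] [HopfAlgebra k H] :
    Type 1 where
  R : Type
  [commSemiring : CommSemiring R]
  cls : Comod k H → R
  cls_one : cls (Comod.unit k H) = 1
  cls_iso : ∀ M N : Comod k H, M.IsComodule → N.IsComodule →
    FiniteDimensional k M.X → FiniteDimensional k N.X → Comod.Iso M N → cls M = cls N
  cls_dsum : ∀ M N : Comod k H, M.IsComodule → N.IsComodule →
    FiniteDimensional k M.X → FiniteDimensional k N.X →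
      cls (M.dsum N) = cls M + cls N
  cls_tensor : ∀ M N : Comod k H, M.IsComodule → N.IsComodule →
    FiniteDimensional k M.X → FiniteDimensional k N.X →
      cls (M.tensor N) = cls M * cls N
  cls_surj : ∀ r : R, ∃ M : Comod k H, M.IsComodule ∧ FiniteDimensional k M.X ∧ cls M = r
  cls_inj : ∀ M N : Comod k H, M.IsComodule → N.IsComodule →
    FiniteDimensional k M.X → FiniteDimensional k N.X → cls M = cls N → Comod.Iso M N

attribute [instance] GrSemiring.commSemiring

namespace Comod

variable {k : Type} [Field k] {H : Type} [Ring H] [HopfAlgebra k H]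

lemma coassoc_comp (M N : Comod k H) (e : M.X →ₗ[k] N.X) (he : IsHom M N e) :
    (N.ρ.rTensor H ∘ₗ N.ρ) ∘ₗ e
      = (e.rTensor H).rTensor H ∘ₗ (M.ρ.rTensor H ∘ₗ M.ρ) := by
  unfold IsHom at he
  rw [LinearMap.comp_assoc, he, ← LinearMap.comp_assoc, ← LinearMap.rTensor_comp, he,
    LinearMap.rTensor_comp, LinearMap.comp_assoc]

lemma assoc_nat {A B : Type} [AddCommGroup A] [Module k A] [AddCommGroup B] [Module k B]
    (e : A →ₗ[k] B) :
    ((TensorProduct.assoc k B H H).symm.toLinearMap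
        ∘ₗ (Coalgebra.comul (R := k) (A := H)).lTensor B) ∘ₗ e.rTensor H
      = (e.rTensor H).rTensor H ∘ₗ ((TensorProduct.assoc k A H H).symm.toLinearMap
        ∘ₗ (Coalgebra.comul (R := k) (A := H)).lTensor A) := by
  apply TensorProduct.ext'
  intro x h
  simp only [LinearMap.comp_apply, LinearMap.rTensor_tmul, LinearMap.lTensor_tmul]
  generalize (Coalgebra.comul (R := k) h) = t
  induction t using TensorProduct.induction_on with
  | zero => simp
  | tmul a b => simp
  | add a b ha hb => simp only [TensorProduct.tmul_add, map_add, ha, hb]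

lemma coassoc_comp' (M N : Comod k H) (e : M.X →ₗ[k] N.X) (he : IsHom M N e) :
    ((TensorProduct.assoc k N.X H H).symm.toLinearMap
        ∘ₗ (Coalgebra.comul (R := k) (A := H)).lTensor N.X ∘ₗ N.ρ) ∘ₗ e
      = (e.rTensor H).rTensor H ∘ₗ ((TensorProduct.assoc k M.X H H).symm.toLinearMap
        ∘ₗ (Coalgebra.comul (R := k) (A := H)).lTensor M.X ∘ₗ M.ρ) := by
  have h := assoc_nat (H := H) e
  unfold IsHom at he
  rw [LinearMap.comp_assoc, LinearMap.comp_assoc, he]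
  rw [← LinearMap.comp_assoc, ← LinearMap.comp_assoc, h]
  simp only [LinearMap.comp_assoc]

lemma counit_comp (M N : Comod k H) (e : M.X →ₗ[k] N.X) (he : IsHom M N e) :
    ((TensorProduct.rid k N.X).toLinearMap
      ∘ₗ (Coalgebra.counit (R := k) (A := H)).lTensor N.X ∘ₗ N.ρ) ∘ₗ e
      = e ∘ₗ ((TensorProduct.rid k M.X).toLinearMap
      ∘ₗ (Coalgebra.counit (R := k) (A := H)).lTensor M.X ∘ₗ M.ρ) := by
  have h : ((TensorProduct.rid k N.X).toLinearMap
      ∘ₗ (Coalgebra.counit (R := k) (A := H)).lTensor N.X) ∘ₗ e.rTensor H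
      = e ∘ₗ ((TensorProduct.rid k M.X).toLinearMap
      ∘ₗ (Coalgebra.counit (R := k) (A := H)).lTensor M.X) := by
    apply TensorProduct.ext'
    intro x h
    simp
  unfold IsHom at he
  rw [LinearMap.comp_assoc, LinearMap.comp_assoc, he]
  rw [← LinearMap.comp_assoc, ← LinearMap.comp_assoc, h]
  simp only [LinearMap.comp_assoc]

lemma IsComodule.of_injective {M N : Comod k H} (e : M.X →ₗ[k] N.X) (he : IsHom M N e)
    (hi : Function.Injective e) (hN : N.IsComodule) : M.IsComodule := by
  constructor
  · have h1 := coassoc_comp M N e he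
    have h2 := coassoc_comp' M N e he
    rw [hN.1, h2] at h1
    have hinj : Function.Injective ((e.rTensor H).rTensor H) :=
      Module.Flat.rTensor_preserves_injective_linearMap _
        (Module.Flat.rTensor_preserves_injective_linearMap _ hi)
    ext x
    exact hinj (LinearMap.congr_fun h1.symm x)
  · have h1 := counit_comp M N e he
    rw [hN.2] at h1
    ext x
    exact hi (LinearMap.congr_fun h1.symm x)

lemma IsComodule.of_iso {M N : Comod k H} (h : Iso M N) (hN : N.IsComodule) :
    M.IsComodule := by
  obtain ⟨e, he⟩ := h
  exact IsComodule.of_injective _ he e.injective hN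

lemma Iso.symm {M N : Comod k H} (h : Iso M N) : Iso N M := by
  obtain ⟨e, he⟩ := h
  refine ⟨e.symm, ?_⟩
  unfold IsHom at *
  have h1 : e.symm.toLinearMap.rTensor H ∘ₗ e.toLinearMap.rTensor H = LinearMap.id := by
    rw [← LinearMap.rTensor_comp]; simp
  have h2 : e.toLinearMap ∘ₗ e.symm.toLinearMap = LinearMap.id := by simp
  calc M.ρ ∘ₗ e.symm.toLinearMap
      = (e.symm.toLinearMap.rTensor H ∘ₗ e.toLinearMap.rTensor H) ∘ₗ M.ρ
          ∘ₗ e.symm.toLinearMap := by rw [h1, LinearMap.id_comp]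
    _ = e.symm.toLinearMap.rTensor H ∘ₗ (e.toLinearMap.rTensor H ∘ₗ M.ρ)
          ∘ₗ e.symm.toLinearMap := by simp only [LinearMap.comp_assoc]
    _ = e.symm.toLinearMap.rTensor H ∘ₗ N.ρ ∘ₗ (e.toLinearMap ∘ₗ e.symm.toLinearMap) := by
          rw [← he]; simp only [LinearMap.comp_assoc]
    _ = _ := by rw [h2, LinearMap.comp_id]

lemma isHom_inl (M N : Comod k H) : IsHom M (M.dsum N) (LinearMap.inl k M.X N.X) := by
  refine LinearMap.ext fun x => ?_
  change (LinearMap.inl k M.X N.X).rTensor H (M.ρ x)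
    + (LinearMap.inr k M.X N.X).rTensor H (N.ρ 0)
    = (LinearMap.inl k M.X N.X).rTensor H (M.ρ x)
  rw [map_zero, map_zero, add_zero]

lemma isHom_inr (M N : Comod k H) : IsHom N (M.dsum N) (LinearMap.inr k M.X N.X) := by
  refine LinearMap.ext fun x => ?_
  change (LinearMap.inl k M.X N.X).rTensor H (M.ρ 0)
    + (LinearMap.inr k M.X N.X).rTensor H (N.ρ x)
    = (LinearMap.inr k M.X N.X).rTensor H (N.ρ x)
  rw [map_zero, map_zero, zero_add]

lemma IsComodule.dsum {M N : Comod k H} (hM : M.IsComodule) (hN : N.IsComodule) :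
    (M.dsum N).IsComodule := by
  constructor
  · refine LinearMap.prod_ext (M := M.X) (M₂ := N.X) ?_ ?_
    · exact (coassoc_comp _ _ _ (isHom_inl M N)).trans
        ((congrArg _ hM.1).trans (coassoc_comp' _ _ _ (isHom_inl M N)).symm)
    · exact (coassoc_comp _ _ _ (isHom_inr M N)).trans
        ((congrArg _ hN.1).trans (coassoc_comp' _ _ _ (isHom_inr M N)).symm)
  · refine LinearMap.prod_ext (M := M.X) (M₂ := N.X) ?_ ?_
    · exact (counit_comp _ _ _ (isHom_inl M N)).trans (congrArg _ hM.2)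
    · exact (counit_comp _ _ _ (isHom_inr M N)).trans (congrArg _ hN.2)

lemma exists_restrict (M : Comod k H) (N : Submodule k M.X) (hN : M.IsSubcomodule N) :
    ∃ r : N →ₗ[k] N ⊗[k] H, M.ρ ∘ₗ N.subtype = N.subtype.rTensor H ∘ₗ r := by
  have hinj : Function.Injective (N.subtype.rTensor H) :=
    Module.Flat.rTensor_preserves_injective_linearMap _ N.injective_subtype
  let E := LinearEquiv.ofInjective _ hinj
  refine ⟨E.symm.toLinearMap ∘ₗ (M.ρ ∘ₗ N.subtype).codRestrict _ (fun x => hN x x.2), ?_⟩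
  refine LinearMap.ext fun x => ?_
  have h := E.apply_symm_apply ((M.ρ ∘ₗ N.subtype).codRestrict _ (fun x => hN x x.2) x)
  exact (congrArg Subtype.val h).symm

lemma exists_split (M : Comod k H) (hM : M.IsComodule) (N N' : Submodule k M.X)
    (hN : M.IsSubcomodule N) (hN' : M.IsSubcomodule N') (hc : IsCompl N N') :
    ∃ A B : Comod k H, A.IsComodule ∧ B.IsComodule ∧ Nonempty (A.X ≃ₗ[k] N) ∧
      Nonempty (B.X ≃ₗ[k] N') ∧ Iso (A.dsum B) M := by
  obtain ⟨r, hr⟩ := exists_restrict M N hN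
  obtain ⟨r', hr'⟩ := exists_restrict M N' hN'
  let A : Comod k H := { X := N, ρ := r }
  let B : Comod k H := { X := N', ρ := r' }
  have hA : IsHom A M N.subtype := hr
  have hB : IsHom B M N'.subtype := hr'
  refine ⟨A, B, IsComodule.of_injective _ hA N.injective_subtype hM,
    IsComodule.of_injective _ hB N'.injective_subtype hM,
    ⟨LinearEquiv.refl k N⟩, ⟨LinearEquiv.refl k N'⟩,
    Submodule.prodEquivOfIsCompl N N' hc, ?_⟩
  have e1 : (Submodule.prodEquivOfIsCompl N N' hc).toLinearMap ∘ₗ LinearMap.inl k N N'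
      = N.subtype := by
    ext x; simp
  have e2 : (Submodule.prodEquivOfIsCompl N N' hc).toLinearMap ∘ₗ LinearMap.inr k N N'
      = N'.subtype := by
    ext x; simp
  unfold IsHom
  refine LinearMap.prod_ext (M := N) (M₂ := N') ?_ ?_
  · have h := isHom_inl A B
    unfold IsHom at h
    refine (LinearMap.comp_assoc _ _ _).trans ?_
    refine (congrArg (M.ρ ∘ₗ ·) e1).trans ?_
    refine Eq.trans ?_ (LinearMap.comp_assoc _ _ _).symm
    refine Eq.trans ?_ (congrArg _ h.symm)
    refine Eq.trans ?_ (LinearMap.comp_assoc _ _ _)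
    refine hA.trans ?_
    refine congrArg (· ∘ₗ A.ρ) ?_
    refine Eq.trans ?_ (LinearMap.rTensor_comp _ _ _)
    exact (congrArg (LinearMap.rTensor H) e1).symm
  · have h := isHom_inr A B
    unfold IsHom at h
    refine (LinearMap.comp_assoc _ _ _).trans ?_
    refine (congrArg (M.ρ ∘ₗ ·) e2).trans ?_
    refine Eq.trans ?_ (LinearMap.comp_assoc _ _ _).symm
    refine Eq.trans ?_ (congrArg _ h.symm)
    refine Eq.trans ?_ (LinearMap.comp_assoc _ _ _)
    refine hB.trans ?_
    refine congrArg (· ∘ₗ B.ρ) ?_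
    refine Eq.trans ?_ (LinearMap.rTensor_comp _ _ _)
    exact (congrArg (LinearMap.rTensor H) e2).symm

lemma finite_dsum (M N : Comod k H) (hM : FiniteDimensional k M.X)
    (hN : FiniteDimensional k N.X) : FiniteDimensional k (M.dsum N).X :=
  inferInstanceAs (FiniteDimensional k (M.X × N.X))

lemma finite_tensor (M N : Comod k H) (hM : FiniteDimensional k M.X)
    (hN : FiniteDimensional k N.X) : FiniteDimensional k (M.tensor N).X :=
  inferInstanceAs (FiniteDimensional k (M.X ⊗[k] N.X))

end Comod

open Comod

lemma eq_of_eq_on_simple {k : Type} [Field k] {H : Type} [Ring H] [HopfAlgebra k H]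
    (hH : IsCosemisimple k H) (G : GrSemiring k H) (f g : G.R →+* ℕ)
    (hs : ∀ S : Comod k H, S.IsSimple → f (G.cls S) = g (G.cls S)) : f = g := by
  have key : ∀ n : ℕ, ∀ M : Comod k H, M.IsComodule → FiniteDimensional k M.X →
      Module.finrank k M.X = n → f (G.cls M) = g (G.cls M) := by
    intro n
    induction n using Nat.strong_induction_on with
    | _ n ih =>
    intro M hM hfd hn
    by_cases hnt : Nontrivial M.X
    · by_cases hsimp : M.IsSimple
      · exact hs M hsimp
      · have : ∃ N : Submodule k M.X, M.IsSubcomodule N ∧ N ≠ ⊥ ∧ N ≠ ⊤ := by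
          by_contra hcon
          push Not at hcon
          exact hsimp ⟨hM, hnt, hfd, fun N hN => or_iff_not_imp_left.2 (hcon N hN)⟩
        obtain ⟨N, hN, hb, ht⟩ := this
        obtain ⟨N', hN', hc⟩ := hH M hM N hN
        obtain ⟨A, B, hA, hB, ⟨eA⟩, ⟨eB⟩, hiso⟩ := exists_split M hM N N' hN hN' hc
        have fA : FiniteDimensional k A.X := Module.Finite.equiv eA.symm
        have fB : FiniteDimensional k B.X := Module.Finite.equiv eB.symm
        have ht' : N' ≠ ⊤ := by
          rintro rfl
          exact hb (by simpa using hc.inf_eq_bot)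
        have lA : Module.finrank k A.X < n := by
          rw [eA.finrank_eq, ← hn]
          exact Submodule.finrank_lt ht
        have lB : Module.finrank k B.X < n := by
          rw [eB.finrank_eq, ← hn]
          exact Submodule.finrank_lt ht'
        have hcl := G.cls_iso _ _ (hA.dsum hB) hM (finite_dsum A B fA fB) hfd hiso
        rw [← hcl, G.cls_dsum A B hA hB fA fB, map_add, map_add,
          ih _ lA A hA fA rfl, ih _ lB B hB fB rfl]
    · have hsub : Subsingleton M.X := not_nontrivial_iff_subsingleton.1 hnt
      have hc : IsCompl (⊥ : Submodule k M.X) (⊥ : Submodule k M.X) := by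
        have : (⊥ : Submodule k M.X) = ⊤ := Subsingleton.elim _ _
        constructor
        · simp
        · rw [codisjoint_iff]; simpa using this
      have hiso : Iso M (M.dsum M) := by
        refine ⟨LinearEquiv.ofBijective (LinearMap.inl k M.X M.X) ⟨LinearMap.inl_injective, ?_⟩,
          isHom_inl M M⟩
        intro y
        exact ⟨0, Subsingleton.elim (α := M.X × M.X) _ _⟩
      have hcl := G.cls_iso _ _ hM (hM.dsum hM) hfd (finite_dsum M M hfd hfd) hiso
      rw [G.cls_dsum M M hM hM hfd hfd] at hcl
      have h1 := congrArg f hcl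
      have h2 := congrArg g hcl
      rw [map_add] at h1 h2
      omega
  ext r
  obtain ⟨M, hM, hfd, rfl⟩ := G.cls_surj r
  exact key _ M hM hfd rfl

section

variable {k : Type} [Field k] {H : Type} [Ring H] [HopfAlgebra k H]

lemma cls_simple_iso (G : GrSemiring k H) {M N : Comod k H} (hM : M.IsSimple)
    (hN : N.IsSimple) (h : Iso M N) : G.cls M = G.cls N :=
  G.cls_iso _ _ hM.1 hN.1 hM.2.2.1 hN.2.2.1 h

lemma cls_simple_unit (G : GrSemiring k H) {M : Comod k H} (hM : M.IsSimple)
    (h : Iso M (Comod.unit k H)) : G.cls M = 1 := by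
  rw [← G.cls_one]
  exact G.cls_iso _ _ hM.1 (IsComodule.of_iso h.symm hM.1) hM.2.2.1
    (inferInstanceAs (FiniteDimensional k k)) h

lemma cls_tensor_iso (G : GrSemiring k H) {A B C : Comod k H} (hA : A.IsSimple)
    (hB : B.IsSimple) (hC : C.IsSimple) (h : Iso (A.tensor B) C) :
    G.cls A * G.cls B = G.cls C := by
  rw [← G.cls_tensor A B hA.1 hB.1 hA.2.2.1 hB.2.2.1]
  exact G.cls_iso _ _ (IsComodule.of_iso h hC.1) hC.1
    (finite_tensor A B hA.2.2.1 hB.2.2.1) hC.2.2.1 h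

lemma cls_fusion (G : GrSemiring k H) {A B C D : Comod k H} (hA : A.IsSimple)
    (hB : B.IsSimple) (hC : C.IsSimple) (hD : D.IsSimple)
    (h : Iso (A.tensor B) (C.dsum D)) :
    G.cls A * G.cls B = G.cls C + G.cls D := by
  have hCD := hC.1.dsum hD.1
  rw [← G.cls_tensor A B hA.1 hB.1 hA.2.2.1 hB.2.2.1,
    ← G.cls_dsum C D hC.1 hD.1 hC.2.2.1 hD.2.2.1]
  exact G.cls_iso _ _ (IsComodule.of_iso h hCD) hCD
    (finite_tensor A B hA.2.2.1 hB.2.2.1) (finite_dsum C D hC.2.2.1 hD.2.2.1) h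

end

/-- Lemma 3.8 of the paper.  For generic `q`, a semiring
homomorphism from the Grothendieck semiring of `O_q(SL(2))` (resp. of
`O_q(GL(2))`) to `ℤ_+ = ℕ` is uniquely determined by its value on the class of
any `2`-dimensional simple comodule.

Here `O_q(SL(2))` (for generic `q`) is characterized as a cosemisimple Hopf
algebra over `ℂ` whose simple comodules are `V_0 = 𝟏, V_1, V_2, …` with
`dim V_n = n + 1`, every simple comodule isomorphic to exactly one `V_n`,
and Clebsch-Gordan fusion `V_1 ⊗ V_{n+1} ≅ V_{n+2} ⊕ V_n`; similarly
`O_q(GL(2))` has simple comodules `V_{n,m}` (`n ∈ ℕ`, `m ∈ ℤ`) with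
`dim V_{n,m} = n + 1`, `V_{0,0} = 𝟏`, `V_{0,m} ⊗ V_{0,m'} ≅ V_{0,m+m'}`,
`V_{1,0} ⊗ V_{0,m} ≅ V_{1,m}` and
`V_{1,0} ⊗ V_{n+1,m} ≅ V_{n+2,m} ⊕ V_{n,m+1}`. -/
theorem stmt8 :
    (∀ (H : Type) [Ring H] [HopfAlgebra ℂ H],
      IsCosemisimple ℂ H →
      ∀ G : GrSemiring ℂ H, ∀ V : ℕ → Comod ℂ H,
        (∀ n, (V n).IsSimple) →
        (∀ n, Module.finrank ℂ (V n).X = n + 1) →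
        (∀ M : Comod ℂ H, M.IsSimple → ∃ n, Comod.Iso M (V n)) →
        (∀ n m, Comod.Iso (V n) (V m) → n = m) →
        Comod.Iso (V 0) (Comod.unit ℂ H) →
        (∀ n, Comod.Iso ((V 1).tensor (V (n + 1))) ((V (n + 2)).dsum (V n))) →
        ∀ f g : G.R →+* ℕ,
          ∀ W : Comod ℂ H, W.IsSimple → Module.finrank ℂ W.X = 2 →
            f (G.cls W) = g (G.cls W) → f = g) ∧
    (∀ (H : Type) [Ring H] [HopfAlgebra ℂ H],
      IsCosemisimple ℂ H →
      ∀ G : GrSemiring ℂ H, ∀ V : ℕ → ℤ → Comod ℂ H,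
        (∀ n m, (V n m).IsSimple) →
        (∀ n m, Module.finrank ℂ (V n m).X = n + 1) →
        (∀ M : Comod ℂ H, M.IsSimple → ∃ n m, Comod.Iso M (V n m)) →
        (∀ n m n' m', Comod.Iso (V n m) (V n' m') → n = n' ∧ m = m') →
        Comod.Iso (V 0 0) (Comod.unit ℂ H) →
        (∀ m m', Comod.Iso ((V 0 m).tensor (V 0 m')) (V 0 (m + m'))) →
        (∀ m, Comod.Iso ((V 1 0).tensor (V 0 m)) (V 1 m)) →
        (∀ n m, Comod.Iso ((V 1 0).tensor (V (n + 1) m))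
            ((V (n + 2) m).dsum (V n (m + 1)))) →
        ∀ f g : G.R →+* ℕ,
          ∀ W : Comod ℂ H, W.IsSimple → Module.finrank ℂ W.X = 2 →
            f (G.cls W) = g (G.cls W) → f = g) := by
  constructor
  · intro H _ _ hH G V hS hdim hall _ h0 hfus f g W hW hW2 hfg
    refine eq_of_eq_on_simple hH G f g ?_
    have c0 : G.cls (V 0) = 1 := cls_simple_unit G (hS 0) h0
    have e1 : f (G.cls (V 1)) = g (G.cls (V 1)) := by
      obtain ⟨n, hn⟩ := hall W hW
      have hd : n + 1 = 2 := by
        obtain ⟨e, _⟩ := hn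
        rw [← hdim n, ← hW2, e.finrank_eq]
      obtain rfl : n = 1 := by omega
      rwa [cls_simple_iso G hW (hS 1) hn] at hfg
    have key : ∀ n, f (G.cls (V n)) = g (G.cls (V n)) ∧
        f (G.cls (V (n + 1))) = g (G.cls (V (n + 1))) := by
      intro n
      induction n with
      | zero => exact ⟨by rw [c0, map_one, map_one], e1⟩
      | succ n ih =>
        refine ⟨ih.2, ?_⟩
        have hc := cls_fusion G (hS _) (hS _) (hS _) (hS _) (hfus n)
        have h1 := congrArg f hc
        have h2 := congrArg g hc
        rw [map_mul, map_add] at h1 h2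
        rw [e1, ih.1, ih.2] at h1
        exact Nat.add_right_cancel (h1.symm.trans h2)
    intro S hSS
    obtain ⟨n, hn⟩ := hall S hSS
    rw [cls_simple_iso G hSS (hS n) hn]
    exact (key n).1
  · intro H _ _ hH G V hS hdim hall _ h0 hadd hone hfus f g W hW hW2 hfg
    refine eq_of_eq_on_simple hH G f g ?_
    have c0 : G.cls (V 0 0) = 1 := cls_simple_unit G (hS 0 0) h0
    have u : ∀ (φ : G.R →+* ℕ) (m : ℤ), φ (G.cls (V 0 m)) = 1 := by
      intro φ m
      have hc := cls_tensor_iso G (hS _ _) (hS _ _) (hS _ _) (hadd m (-m))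
      rw [add_neg_cancel, c0] at hc
      have h1 := congrArg φ hc
      rw [map_mul, map_one] at h1
      exact Nat.eq_one_of_mul_eq_one_right h1
    have v : ∀ (φ : G.R →+* ℕ) (m : ℤ), φ (G.cls (V 1 m)) = φ (G.cls (V 1 0)) := by
      intro φ m
      have hc := cls_tensor_iso G (hS _ _) (hS _ _) (hS _ _) (hone m)
      rw [← hc, map_mul, u, mul_one]
    have e1 : f (G.cls (V 1 0)) = g (G.cls (V 1 0)) := by
      obtain ⟨n, m, hn⟩ := hall W hW
      have hd : n + 1 = 2 := by
        obtain ⟨e, _⟩ := hn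
        rw [← hdim n m, ← hW2, e.finrank_eq]
      obtain rfl : n = 1 := by omega
      rwa [cls_simple_iso G hW (hS 1 m) hn, v f, v g] at hfg
    have key : ∀ n, ∀ m, f (G.cls (V n m)) = g (G.cls (V n m)) ∧
        f (G.cls (V (n + 1) m)) = g (G.cls (V (n + 1) m)) := by
      intro n
      induction n with
      | zero => exact fun m => ⟨by rw [u, u], by rw [zero_add, v f, v g, e1]⟩
      | succ n ih =>
        intro m
        refine ⟨(ih m).2, ?_⟩
        have hc := cls_fusion G (hS _ _) (hS _ _) (hS _ _) (hS _ _) (hfus n m)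
        have h1 := congrArg f hc
        have h2 := congrArg g hc
        rw [map_mul, map_add] at h1 h2
        rw [e1, (ih (m + 1)).1, (ih m).2] at h1
        exact Nat.add_right_cancel (h1.symm.trans h2)
    intro S hSS
    obtain ⟨n, m, hn⟩ := hall S hSS
    rw [cls_simple_iso G hSS (hS n m) hn]
    exact (key n m).1
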